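/- arXiv:1510.00092 — 2 statements merged into one kernel-verified Lean document; each statement's English description precedes it below -/
import Mathlib

section
/- There is no injective group homomorphism from G into GL(3, ℂ) (the group of invertible 3×3 complex matrices); i.e., G is not isomorphic to any subgroup of GL(3, ℂ). -/
/-- The coordinate permutation τ = (0 4 1 3) on six letters. -/
def τ6 : Equiv.Perm (Fin 6) := c[0, 4, 1, 3]

/-- The coordinate permutation h = (2 0 4 3 1) on six letters. -/
def h6 : Equiv.Perm (Fin 6) := c[2, 0, 4, 3, 1]

/-- The subgroup G = ⟨τ, h⟩ of S₆, isomorphic to GA(1,5). -/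
def G6 : Subgroup (Equiv.Perm (Fin 6)) := Subgroup.closure {τ6, h6}

/-! In any representation, `t * g * t⁻¹ = g ^ 2` makes the spectrum of `g` closed under squaring.
If `g` has order 5 and acts nontrivially in characteristic other than 5, then one of its eigenvalues
is a primitive fifth root of unity `ζ`. Since 2 generates `(ℤ/5)ˣ`, repeated squaring of `ζ` gives
all four primitive fifth roots of unity, so the degree is at least 4. -/

theorem orderOf_natCast_le_ncard_of_pow_mem {M : Type*} [Monoid M] {S : Set M} (hS : S.Finite)
    {x : M} (hx : IsOfFinOrder x) (hxS : x ∈ S) {k : ℕ} (hpow : ∀ y ∈ S, y ^ k ∈ S) :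
    orderOf (k : ZMod (orderOf x)) ≤ S.ncard := by
  have hmem (i : ℕ) : x ^ k ^ i ∈ S := by
    induction i with
    | zero => simpa only [pow_zero, pow_one] using hxS
    | succ i ih => simpa only [pow_succ, pow_mul] using hpow _ ih
  have hinj : Set.InjOn (fun i ↦ x ^ k ^ i) (Set.Iio (orderOf (k : ZMod (orderOf x)))) := by
    intro i hi j hj hij
    have hmod : k ^ i ≡ k ^ j [MOD orderOf x] := hx.pow_eq_pow_iff_modEq.mp hij
    refine pow_injOn_Iio_orderOf hi hj ?_
    exact_mod_cast (ZMod.natCast_eq_natCast_iff _ _ _).mpr hmod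
  calc orderOf (k : ZMod (orderOf x))
      = (Set.Iio (orderOf (k : ZMod (orderOf x)))).ncard := by simp
    _ ≤ S.ncard := Set.ncard_le_ncard_of_injOn _ (fun i _ ↦ hmem i) hinj hS

theorem pow_mem_spectrum_of_conj_eq_pow {K A : Type*} [Field K] [Ring A] [Algebra K A]
    {t : Aˣ} {a : A} {k : ℕ} (hconj : t * a * ↑t⁻¹ = a ^ k) {z : K} (hz : z ∈ spectrum K a) :
    z ^ k ∈ spectrum K a := by
  rw [← spectrum.units_conjugate (u := t), hconj]
  exact spectrum.pow_mem_pow a k hz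

open Polynomial in
theorem exists_isPrimitiveRoot_mem_spectrum {K A : Type*} [Field K] [IsAlgClosed K] [Ring A]
    [Algebra K A] {p : ℕ} [Fact p.Prime] (hpK : (p : K) ≠ 0) {a : A}
    (ha : orderOf a = p) : ∃ ζ ∈ spectrum K a, IsPrimitiveRoot ζ p := by
  have ha1 : a ≠ 1 := by
    rintro rfl
    exact (Fact.out : p.Prime).ne_one (ha.symm.trans orderOf_one)
  have : Nontrivial A := ⟨a, 1, ha1⟩
  have hfactor : aeval a (cyclotomic p K) * (a - 1) = 0 := by
    simpa [← ha, pow_orderOf_eq_one] using congrArg (aeval a) (cyclotomic_prime_mul_X_sub_one K p)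
  have hzero : 0 ∈ spectrum K (aeval a (cyclotomic p K)) := by
    rw [spectrum.zero_mem_iff]
    exact fun hunit ↦ ha1 (sub_eq_zero.mp (hunit.mul_right_eq_zero.mp hfactor))
  rw [spectrum.map_polynomial_aeval_of_degree_pos a _
    (degree_cyclotomic_pos p K (Fact.out : p.Prime).pos)] at hzero
  obtain ⟨ζ, hζ, hroot⟩ := hzero
  have : NeZero (p : K) := ⟨hpK⟩
  exact ⟨ζ, hζ, isRoot_cyclotomic_iff.mp hroot⟩

section Matrix

variable {n K : Type*} [Fintype n] [DecidableEq n] [Field K]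

theorem ncard_spectrum_le_card (A : Matrix n n K) : (spectrum K A).ncard ≤ Fintype.card n := by
  have hroots : spectrum K A = A.charpoly.rootSet K := by
    ext z
    rw [Matrix.mem_spectrum_iff_isRoot_charpoly,
      Polynomial.mem_rootSet_of_ne A.charpoly_monic.ne_zero, Polynomial.coe_aeval_eq_eval,
      Polynomial.IsRoot.def]
  calc (spectrum K A).ncard = (A.charpoly.rootSet K).ncard := by rw [hroots]
    _ ≤ A.charpoly.natDegree := A.charpoly.ncard_rootSet_le K
    _ = Fintype.card n := A.charpoly_natDegree_eq_dim

theorem orderOf_natCast_le_card_of_conj_eq_pow_of_isAlgClosed [IsAlgClosed K] {p : ℕ}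
    [Fact p.Prime] (hpK : (p : K) ≠ 0) {t g : GL n K} {k : ℕ} (hg : orderOf g = p)
    (hconj : t * g * t⁻¹ = g ^ k) : orderOf (k : ZMod p) ≤ Fintype.card n := by
  obtain ⟨ζ, hζ, hprim⟩ := exists_isPrimitiveRoot_mem_spectrum hpK (orderOf_units.trans hg)
  have hpow : ∀ z ∈ spectrum K (g : Matrix n n K), z ^ k ∈ spectrum K (g : Matrix n n K) :=
    fun z ↦ pow_mem_spectrum_of_conj_eq_pow (t := t) (by exact_mod_cast congrArg Units.val hconj)
  obtain rfl : p = orderOf ζ := hprim.eq_orderOf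
  calc orderOf (k : ZMod (orderOf ζ)) ≤ (spectrum K (g : Matrix n n K)).ncard :=
        orderOf_natCast_le_ncard_of_pow_mem (Matrix.finite_spectrum _)
          (hprim.isOfFinOrder (NeZero.ne _)) hζ hpow
    _ ≤ Fintype.card n := ncard_spectrum_le_card _

theorem orderOf_natCast_le_card_of_conj_eq_pow {p : ℕ} [Fact p.Prime] (hpK : (p : K) ≠ 0)
    {t g : GL n K} {k : ℕ} (hg : orderOf g = p) (hconj : t * g * t⁻¹ = g ^ k) :
    orderOf (k : ZMod p) ≤ Fintype.card n := by
  let ι : GL n K →* GL n (AlgebraicClosure K) := Matrix.GeneralLinearGroup.map (algebraMap K _)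
  have hι : Function.Injective ι :=
    Units.map_injective (Matrix.map_injective (algebraMap K _).injective)
  refine orderOf_natCast_le_card_of_conj_eq_pow_of_isAlgClosed (K := AlgebraicClosure K)
    (t := ι t) (g := ι g) ?_ ((orderOf_injective ι hι g).trans hg) ?_
  · simpa only [map_natCast, map_zero] using (algebraMap K (AlgebraicClosure K)).injective.ne hpK
  · simpa only [map_mul, map_inv, map_pow] using congrArg ι hconj

end Matrix

theorem orderOf_h6 : orderOf h6 = 5 :=
  orderOf_eq_prime (hp := ⟨Nat.prime_five⟩) (Equiv.ext (by decide)) (by decide)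

theorem τ6_mul_h6_mul_inv : τ6 * h6 * τ6⁻¹ = h6 ^ 2 := by
  decide

theorem orderOf_two_zmod_five : orderOf (2 : ZMod 5) = 4 :=
  (orderOf_eq_iff (by norm_num)).mpr (by decide)

theorem G_not_subgroup_of_GL3_general {n K : Type*} [Fintype n] [DecidableEq n] [Field K]
    (hK : (5 : K) ≠ 0) (hn : Fintype.card n < 4) (φ : G6 →* GL n K) :
    ¬ Function.Injective φ := by
  intro hφ
  have : Fact (Nat.Prime 5) := ⟨Nat.prime_five⟩
  let t : G6 := ⟨τ6, Subgroup.subset_closure (Set.mem_insert _ _)⟩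
  let g : G6 := ⟨h6, Subgroup.subset_closure (Set.mem_insert_of_mem _ rfl)⟩
  have hg : orderOf (φ g) = 5 :=
    calc orderOf (φ g) = orderOf g := orderOf_injective φ hφ g
      _ = orderOf h6 := Subgroup.orderOf_mk h6 _
      _ = 5 := orderOf_h6
  have hconj : φ t * φ g * (φ t)⁻¹ = φ g ^ 2 := by
    simpa only [map_mul, map_inv, map_pow] using
      congrArg φ (Subtype.ext τ6_mul_h6_mul_inv : t * g * t⁻¹ = g ^ 2)
  have hle : orderOf (2 : ZMod 5) ≤ Fintype.card n :=
    orderOf_natCast_le_card_of_conj_eq_pow hK hg hconj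
  rw [orderOf_two_zmod_five] at hle
  exact hn.not_ge hle

/-- G does not embed into GL(3, ℂ). -/
theorem G_not_subgroup_of_GL3 :
    ∀ φ : G6 →* GL (Fin 3) ℂ, ¬ Function.Injective φ :=
  G_not_subgroup_of_GL3_general (by norm_num) (by simp)
end

section
/- There is no injective group homomorphism from G into the symmetric group S₄ (Equiv.Perm (Fin 4)), and there is no injective group homomorphism from G into the alternating group A₅ (alternatingGroup (Fin 5)). -/
/-!
The image of `h`, of order 5, under an embedding into `S₄` would contradict Lagrange's theorem, as
`5 ∤ 24`. The image of `τ`, of order 4, under an embedding into `A₅` would be an even permutation of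
five letters of order 4. But a permutation of prime power order `q > 1` has a cycle of length `q`,
so on five letters an element of order 4 is a single 4-cycle, which is odd.
-/

theorem not_injective_of_not_orderOf_dvd_natCard {M H : Type*} [Monoid M] [Group H] {g : M}
    (hg : ¬ orderOf g ∣ Nat.card H) (φ : M →* H) : ¬ Function.Injective φ := fun hφ =>
  hg (orderOf_injective φ hφ g ▸ orderOf_dvd_natCard (φ g))

theorem prime_pow_mem_of_multiset_lcm_eq {p k : ℕ} (hp : p.Prime) {s : Multiset ℕ}
    (hs : s.lcm = p ^ (k + 1)) : p ^ (k + 1) ∈ s := by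
  have lcm_not_dvd : ¬ s.lcm ∣ p ^ k := by
    rw [hs, Nat.pow_dvd_pow_iff_le_right hp.one_lt]
    exact k.not_succ_le_self
  obtain ⟨n, hn, n_not_dvd⟩ : ∃ n ∈ s, ¬ n ∣ p ^ k := by
    simpa only [Multiset.lcm_dvd, not_forall, exists_prop] using lcm_not_dvd
  have n_eq : n = p ^ (k + 1) :=
    Nat.eq_prime_pow_of_dvd_least_prime_pow hp n_not_dvd (hs ▸ Multiset.dvd_lcm hn)
  exact n_eq ▸ hn

theorem orderOf_formPerm_of_nodup {α : Type*} [DecidableEq α] {l : List α} (hl : l.Nodup)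
    (hl_pos : 0 < l.length) : orderOf l.formPerm = l.length := by
  refine Nat.dvd_antisymm
    (orderOf_dvd_of_pow_eq_one (List.formPerm_pow_length_eq_one_of_nodup l hl))
    (Nat.dvd_of_mod_eq_zero ?_)
  have head_fixed : (l.formPerm ^ orderOf l.formPerm) l[0] = l[0] := by
    rw [pow_orderOf_eq_one, Equiv.Perm.one_apply]
  simpa only [List.formPerm_pow_apply_getElem l hl, hl.getElem_inj_iff, zero_add] using head_fixed

section Perm

variable {α : Type*} [Fintype α] [DecidableEq α]

theorem cycleType_eq_singleton_of_orderOf_eq_prime_pow {p k : ℕ} (hp : p.Prime)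
    {σ : Equiv.Perm α} (hσ : orderOf σ = p ^ (k + 1)) (hα : Fintype.card α < p ^ (k + 1) + 2) :
    σ.cycleType = {p ^ (k + 1)} :=
  Equiv.Perm.cycleType_of_card_le_mem_cycleType_add_two hα
    (prime_pow_mem_of_multiset_lcm_eq hp (σ.lcm_cycleType.trans hσ))

theorem sign_eq_neg_one_of_orderOf_eq_two_pow {k : ℕ} {σ : Equiv.Perm α}
    (hσ : orderOf σ = 2 ^ (k + 1)) (hα : Fintype.card α < 2 ^ (k + 1) + 2) :
    Equiv.Perm.sign σ = -1 := by
  have cycleType_eq := cycleType_eq_singleton_of_orderOf_eq_prime_pow Nat.prime_two hσ hα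
  rw [Equiv.Perm.sign_of_cycleType, cycleType_eq, Multiset.sum_singleton, Multiset.card_singleton]
  exact (even_two.pow_of_ne_zero k.succ_ne_zero).add_one.neg_one_pow

theorem not_injective_alternatingGroup_of_orderOf_eq_two_pow {M : Type*} [Monoid M] {g : M} {k : ℕ}
    (hg : orderOf g = 2 ^ (k + 1)) (hα : Fintype.card α < 2 ^ (k + 1) + 2)
    (ψ : M →* alternatingGroup α) : ¬ Function.Injective ψ := by
  intro hψ
  have orderOf_eq : orderOf (ψ g : Equiv.Perm α) = 2 ^ (k + 1) := by
    rw [Subgroup.orderOf_coe, orderOf_injective ψ hψ, hg]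
  have even : Equiv.Perm.sign (ψ g : Equiv.Perm α) = 1 :=
    Equiv.Perm.mem_alternatingGroup.mp (ψ g).2
  have odd : Equiv.Perm.sign (ψ g : Equiv.Perm α) = -1 :=
    sign_eq_neg_one_of_orderOf_eq_two_pow orderOf_eq hα
  exact absurd (even.symm.trans odd) (by decide)

end Perm

theorem τ6_mem_G6 : τ6 ∈ G6 := Subgroup.subset_closure (Set.mem_insert _ _)

theorem h6_mem_G6 : h6 ∈ G6 := Subgroup.subset_closure (Set.mem_insert_of_mem _ rfl)

theorem orderOf_τ6 : orderOf τ6 = 2 ^ 2 :=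
  orderOf_formPerm_of_nodup (l := [0, 4, 1, 3]) (by decide) (by decide)

/-- G embeds neither into S₄ nor into A₅. -/
theorem G_not_subgroup_of_S4_or_A5 :
    (∀ φ : G6 →* Equiv.Perm (Fin 4), ¬ Function.Injective φ) ∧
    (∀ ψ : G6 →* alternatingGroup (Fin 5), ¬ Function.Injective ψ) := by
  constructor
  · have five_not_dvd : ¬ orderOf (⟨h6, h6_mem_G6⟩ : G6) ∣ Nat.card (Equiv.Perm (Fin 4)) := by
      rw [Subgroup.orderOf_mk, orderOf_h6, Nat.card_perm, Nat.card_fin]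
      decide
    exact not_injective_of_not_orderOf_dvd_natCard five_not_dvd
  · have orderOf_τ : orderOf (⟨τ6, τ6_mem_G6⟩ : G6) = 2 ^ 2 :=
      (Subgroup.orderOf_mk τ6 τ6_mem_G6).trans orderOf_τ6
    exact not_injective_alternatingGroup_of_orderOf_eq_two_pow orderOf_τ (by decide)
end
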